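/- arXiv:2205.05428 — 2 statements merged into one kernel-verified Lean document; each statement's English description precedes it below -/
import Mathlib

section
/- The solution set of problem (PP) is nonempty and bounded; that is, there exists a global minimizer of O over Ω₂, and the set of all global minimizers of O over Ω₂ is bounded. -/
/-!
Every summand of the objective is nonnegative on the feasible set, so a sublevel set `O ≤ θ`
bounds each of them: the regularizers bound the weights and the `v` variables, and the penalty
bounds `v - σ(u)`, hence `σ(u)`. Since `α > 0`, the leaky ReLU is coercive
(`α |t| ≤ |σ(t)|`), so `u` is bounded too. The biases are then bounded through
`b_ℓ = u_{n,ℓ} - W_ℓ v_{n,ℓ-1}`, where at least one sample `n` is needed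
(`levelSet_isBounded`). The feasible set is closed and `O` is continuous, so the sublevel
sets are compact (`levelSet_isClosed`). The sublevel set through the feasible point
`W = 0, b = 0, u = 0, v_{·,ℓ} = 0` for `ℓ ≥ 1` is nonempty; a minimizer over it is a global one,
and it contains all global minimizers.
-/

open Finset Filter Topology

noncomputable section

/-- Leaky ReLU activation with slope `α`. -/
def lrelu (α t : ℝ) : ℝ := max t (α * t)

/-- Weight variables: `W ℓ` here is `W_{ℓ+1}` of the paper (layers `1,…,L`, `L = M+1`). -/
abbrev Wt (M : ℕ) (Nd : ℕ → ℕ) : Type :=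
  (ℓ : Fin (M + 1)) → Fin (Nd (ℓ.1 + 1)) → Fin (Nd ℓ.1) → ℝ

/-- Bias variables. -/
abbrev Bs (M : ℕ) (Nd : ℕ → ℕ) : Type :=
  (ℓ : Fin (M + 1)) → Fin (Nd (ℓ.1 + 1)) → ℝ

/-- Auxiliary `v` variables (`v_{n,ℓ}`, `ℓ = 0,…,L`). -/
abbrev Vs (M N : ℕ) (Nd : ℕ → ℕ) : Type :=
  Fin N → (ℓ : Fin (M + 2)) → Fin (Nd ℓ.1) → ℝ

/-- Auxiliary `u` variables (`u n ℓ` is `u_{n,ℓ+1}` of the paper). -/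
abbrev Us (M N : ℕ) (Nd : ℕ → ℕ) : Type :=
  Fin N → (ℓ : Fin (M + 1)) → Fin (Nd (ℓ.1 + 1)) → ℝ

/-- A full point `(w, b, v, u)` of the variable space. -/
abbrev Pt (M N : ℕ) (Nd : ℕ → ℕ) : Type :=
  Wt M Nd × Bs M Nd × Vs M N Nd × Us M N Nd

variable {M N : ℕ} {Nd : ℕ → ℕ}

/-- Group sparse regularizer `R₁` (sum of Euclidean norms of the columns). -/
def R1 (lw : ℝ) (W : Wt M Nd) : ℝ :=
  lw * ∑ ℓ : Fin (M + 1), ∑ j : Fin (Nd ℓ.1),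
    Real.sqrt (∑ i : Fin (Nd (ℓ.1 + 1)), (W ℓ i j) ^ 2)

/-- Regularizer `R₂ = λ_v ‖v‖²`. -/
def R2 (lv : ℝ) (v : Vs M N Nd) : ℝ :=
  lv * ∑ n : Fin N, ∑ ℓ : Fin (M + 1), ∑ i : Fin (Nd (ℓ.1 + 1)), (v n ℓ.succ i) ^ 2

/-- Objective `Ō` of problem (P). -/
def Obar (lw lv : ℝ) (y : Fin N → Fin (Nd (M + 1)) → ℝ) (z : Pt M N Nd) : ℝ :=
  (1 / (N : ℝ)) * ∑ n : Fin N, ∑ i : Fin (Nd (M + 1)),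
      (z.2.2.1 n (Fin.last (M + 1)) i - y n i) ^ 2
    + R1 lw z.1 + R2 lv z.2.2.1

/-- Penalized objective `O` of problem (PP). -/
def Opp (α β lw lv : ℝ) (y : Fin N → Fin (Nd (M + 1)) → ℝ) (z : Pt M N Nd) : ℝ :=
  Obar lw lv y z
    + β * ∑ n : Fin N, ∑ ℓ : Fin (M + 1), ∑ i : Fin (Nd (ℓ.1 + 1)),
        (z.2.2.1 n ℓ.succ i - lrelu α (z.2.2.2 n ℓ i))

/-- Input convention `v_{n,0} = x_n`. -/
def inputEq (x : Fin N → Fin (Nd 0) → ℝ) (z : Pt M N Nd) : Prop :=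
  ∀ n : Fin N, z.2.2.1 n ⟨0, Nat.succ_pos _⟩ = x n

/-- Linear constraints `u_{n,ℓ} = W_ℓ v_{n,ℓ-1} + b_ℓ`. -/
def linEq (z : Pt M N Nd) : Prop :=
  ∀ (n : Fin N) (ℓ : Fin (M + 1)) (i : Fin (Nd (ℓ.1 + 1))),
    z.2.2.2 n ℓ i = (∑ j : Fin (Nd ℓ.1), z.1 ℓ i j * z.2.2.1 n ℓ.castSucc j) + z.2.1 ℓ i

/-- Cone constraints `v ≥ u`, `v ≥ α u` (componentwise). -/
def inCone (α : ℝ) (z : Pt M N Nd) : Prop :=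
  ∀ (n : Fin N) (ℓ : Fin (M + 1)) (i : Fin (Nd (ℓ.1 + 1))),
    z.2.2.2 n ℓ i ≤ z.2.2.1 n ℓ.succ i ∧ α * z.2.2.2 n ℓ i ≤ z.2.2.1 n ℓ.succ i

/-- Feasible set `Ω₂` of problem (PP). -/
def feas2 (α : ℝ) (x : Fin N → Fin (Nd 0) → ℝ) (z : Pt M N Nd) : Prop :=
  inputEq x z ∧ linEq z ∧ inCone α z

/-- Feasible set `Ω₁` of problem (P). -/
def feas1 (α : ℝ) (x : Fin N → Fin (Nd 0) → ℝ) (z : Pt M N Nd) : Prop :=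
  inputEq x z ∧ linEq z ∧
    ∀ (n : Fin N) (ℓ : Fin (M + 1)) (i : Fin (Nd (ℓ.1 + 1))),
      z.2.2.1 n ℓ.succ i = lrelu α (z.2.2.2 n ℓ i)

/-- Euclidean (ℓ²) distance on the variable space. -/
def l2dist (z z' : Pt M N Nd) : ℝ :=
  Real.sqrt
    ((∑ ℓ : Fin (M + 1), ∑ i : Fin (Nd (ℓ.1 + 1)), ∑ j : Fin (Nd ℓ.1),
        (z.1 ℓ i j - z'.1 ℓ i j) ^ 2)
      + (∑ ℓ : Fin (M + 1), ∑ i : Fin (Nd (ℓ.1 + 1)), (z.2.1 ℓ i - z'.2.1 ℓ i) ^ 2)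
      + (∑ n : Fin N, ∑ ℓ : Fin (M + 2), ∑ i : Fin (Nd ℓ.1),
          (z.2.2.1 n ℓ i - z'.2.2.1 n ℓ i) ^ 2)
      + (∑ n : Fin N, ∑ ℓ : Fin (M + 1), ∑ i : Fin (Nd (ℓ.1 + 1)),
          (z.2.2.2 n ℓ i - z'.2.2.2 n ℓ i) ^ 2))

/-- `θ_w = (θ/λ_w)·√(N_{L+2} + N₀)`. -/
def thw (M : ℕ) (Nd : ℕ → ℕ) (θ lw : ℝ) : ℝ :=
  (θ / lw) * Real.sqrt ((∑ ℓ : Fin (M + 1), (Nd (ℓ.1 + 1) : ℝ)) + (Nd 0 : ℝ))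

/-- `θ_v = √(θ/λ_v)`. -/
def thv (θ lv : ℝ) : ℝ := Real.sqrt (θ / lv)

/-- The level set `Ω_θ`. -/
def levelSet (α β lw lv θ : ℝ) (x : Fin N → Fin (Nd 0) → ℝ)
    (y : Fin N → Fin (Nd (M + 1)) → ℝ) : Set (Pt M N Nd) :=
  {z | feas2 α x z ∧ Opp α β lw lv y z ≤ θ}

/-- Residual of the linear constraint. -/
def resid (z : Pt M N Nd) (n : Fin N) (ℓ : Fin (M + 1)) (i : Fin (Nd (ℓ.1 + 1))) : ℝ :=
  z.2.2.2 n ℓ i - ((∑ j : Fin (Nd ℓ.1), z.1 ℓ i j * z.2.2.1 n ℓ.castSucc j) + z.2.1 ℓ i)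

/-- Augmented Lagrangian `L_ρ(w,b,v,u;ξ)`. -/
def ALag (α β lw lv : ℝ) (y : Fin N → Fin (Nd (M + 1)) → ℝ) (ρ : ℝ) (ξ : Us M N Nd)
    (z : Pt M N Nd) : ℝ :=
  Opp α β lw lv y z
    + ∑ n : Fin N, ∑ ℓ : Fin (M + 1), ∑ i : Fin (Nd (ℓ.1 + 1)), ξ n ℓ i * resid z n ℓ i
    + (ρ / 2) * ∑ n : Fin N, ∑ ℓ : Fin (M + 1), ∑ i : Fin (Nd (ℓ.1 + 1)), (resid z n ℓ i) ^ 2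


lemma lrelu_continuous (α : ℝ) : Continuous (lrelu α) := by
  unfold lrelu; fun_prop

/-- Coercivity of the leaky ReLU. -/
lemma mul_abs_le_abs_lrelu {α : ℝ} (hα0 : 0 < α) (hα1 : α < 1) (t : ℝ) :
    α * |t| ≤ |lrelu α t| := by
  unfold lrelu
  rcases le_total 0 t with h | h
  · rw [max_eq_left (by nlinarith), abs_of_nonneg h]; nlinarith
  · rw [max_eq_right (by nlinarith), abs_mul, abs_of_pos hα0]

lemma sum_nonneg3 {f : (n : Fin N) → (ℓ : Fin (M + 1)) → Fin (Nd (ℓ.1 + 1)) → ℝ}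
    (hf : ∀ n ℓ i, 0 ≤ f n ℓ i) : 0 ≤ ∑ n, ∑ ℓ, ∑ i, f n ℓ i :=
  sum_nonneg fun n _ => sum_nonneg fun ℓ _ => sum_nonneg fun i _ => hf n ℓ i

lemma le_sum3 {f : (n : Fin N) → (ℓ : Fin (M + 1)) → Fin (Nd (ℓ.1 + 1)) → ℝ}
    (hf : ∀ n ℓ i, 0 ≤ f n ℓ i) (n : Fin N) (ℓ : Fin (M + 1)) (i : Fin (Nd (ℓ.1 + 1))) :
    f n ℓ i ≤ ∑ n, ∑ ℓ, ∑ i, f n ℓ i :=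
  (single_le_sum (f := fun i => f n ℓ i) (fun i _ => hf n ℓ i) (mem_univ i)).trans <|
    (single_le_sum (f := fun ℓ => ∑ i, f n ℓ i)
      (fun ℓ _ => sum_nonneg fun i _ => hf n ℓ i) (mem_univ ℓ)).trans <|
    single_le_sum (f := fun n => ∑ ℓ, ∑ i, f n ℓ i)
      (fun n _ => sum_nonneg fun ℓ _ => sum_nonneg fun i _ => hf n ℓ i) (mem_univ n)

lemma R1_nonneg {lw : ℝ} (hlw : 0 < lw) (W : Wt M Nd) : 0 ≤ R1 lw W :=
  mul_nonneg hlw.le (sum_nonneg fun _ _ => sum_nonneg fun _ _ => Real.sqrt_nonneg _)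

lemma R2_nonneg {lv : ℝ} (hlv : 0 < lv) (v : Vs M N Nd) : 0 ≤ R2 lv v :=
  mul_nonneg hlv.le (sum_nonneg3 fun _ _ _ => sq_nonneg _)

/-- Each weight is dominated by the Euclidean norm of its column. -/
lemma abs_weight_le {lw : ℝ} (hlw : 0 < lw) (W : Wt M Nd) (ℓ : Fin (M + 1))
    (i : Fin (Nd (ℓ.1 + 1))) (j : Fin (Nd ℓ.1)) : lw * |W ℓ i j| ≤ R1 lw W := by
  refine mul_le_mul_of_nonneg_left ?_ hlw.le
  calc |W ℓ i j| = Real.sqrt ((W ℓ i j) ^ 2) := (Real.sqrt_sq_eq_abs _).symm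
    _ ≤ Real.sqrt (∑ i, (W ℓ i j) ^ 2) := Real.sqrt_le_sqrt <|
        single_le_sum (f := fun i => (W ℓ i j) ^ 2) (fun _ _ => sq_nonneg _) (mem_univ i)
    _ ≤ ∑ j, Real.sqrt (∑ i, (W ℓ i j) ^ 2) :=
        single_le_sum (f := fun j => Real.sqrt (∑ i, (W ℓ i j) ^ 2))
          (fun _ _ => Real.sqrt_nonneg _) (mem_univ j)
    _ ≤ _ :=
        single_le_sum (f := fun ℓ : Fin (M + 1) => ∑ j, Real.sqrt (∑ i, (W ℓ i j) ^ 2))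
          (fun _ _ => sum_nonneg fun _ _ => Real.sqrt_nonneg _) (mem_univ ℓ)

/-- The cone constraints say exactly that each penalty summand is nonnegative. -/
lemma penalty_nonneg {α : ℝ} {z : Pt M N Nd} (hz : inCone α z) (n : Fin N) (ℓ : Fin (M + 1))
    (i : Fin (Nd (ℓ.1 + 1))) : 0 ≤ z.2.2.1 n ℓ.succ i - lrelu α (z.2.2.2 n ℓ i) :=
  sub_nonneg.2 (max_le (hz n ℓ i).1 (hz n ℓ i).2)

lemma Opp_bounds {α β lw lv : ℝ} (hβ : 0 < β) (hlw : 0 < lw) (hlv : 0 < lv)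
    {y : Fin N → Fin (Nd (M + 1)) → ℝ} {z : Pt M N Nd} (hz : inCone α z) :
    R1 lw z.1 ≤ Opp α β lw lv y z ∧ R2 lv z.2.2.1 ≤ Opp α β lw lv y z ∧
      β * ∑ n : Fin N, ∑ ℓ : Fin (M + 1), ∑ i : Fin (Nd (ℓ.1 + 1)),
        (z.2.2.1 n ℓ.succ i - lrelu α (z.2.2.2 n ℓ i)) ≤ Opp α β lw lv y z := by
  have h1 := R1_nonneg hlw z.1
  have h2 := R2_nonneg hlv z.2.2.1
  have h3 := mul_nonneg hβ.le (sum_nonneg3 (penalty_nonneg hz))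
  have h4 : 0 ≤ (1 / (N : ℝ)) * ∑ n : Fin N, ∑ i : Fin (Nd (M + 1)),
      (z.2.2.1 n (Fin.last (M + 1)) i - y n i) ^ 2 :=
    mul_nonneg (by positivity) (sum_nonneg fun _ _ => sum_nonneg fun _ _ => sq_nonneg _)
  unfold Opp Obar
  refine ⟨?_, ?_, ?_⟩ <;> linarith

lemma Opp_continuous (α β lw lv : ℝ) (y : Fin N → Fin (Nd (M + 1)) → ℝ) :
    Continuous (Opp α β lw lv y) := by
  unfold Opp Obar R1 R2
  have := lrelu_continuous α
  fun_prop

lemma levelSet_isClosed (α β lw lv θ : ℝ) (x : Fin N → Fin (Nd 0) → ℝ)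
    (y : Fin N → Fin (Nd (M + 1)) → ℝ) : IsClosed (levelSet α β lw lv θ x y) := by
  unfold levelSet feas2 inputEq linEq inCone
  simp only [Set.ofPred_and, Set.ofPred_forall]
  refine .inter (.inter ?_ (.inter ?_ ?_)) ?_
  · exact isClosed_iInter fun n => isClosed_eq (by fun_prop) (by fun_prop)
  · exact isClosed_iInter fun n => isClosed_iInter fun ℓ => isClosed_iInter fun i =>
      isClosed_eq (by fun_prop) (by fun_prop)
  · exact isClosed_iInter fun n => isClosed_iInter fun ℓ => isClosed_iInter fun i =>
      .inter (isClosed_le (by fun_prop) (by fun_prop)) (isClosed_le (by fun_prop) (by fun_prop))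
  · exact isClosed_le (Opp_continuous α β lw lv y) continuous_const

lemma levelSet_isBounded (hN : 1 ≤ N) {α β lw lv : ℝ} (hα0 : 0 < α) (hα1 : α < 1) (hβ : 0 < β)
    (hlw : 0 < lw) (hlv : 0 < lv) (θ : ℝ) (x : Fin N → Fin (Nd 0) → ℝ)
    (y : Fin N → Fin (Nd (M + 1)) → ℝ) :
    Bornology.IsBounded (levelSet α β lw lv θ x y) := by
  -- `A`, `B`, `D` bound the weights, the `v` variables (inputs included) and the `u` variables.
  set A : ℝ := |θ| / lw with hA
  set B : ℝ := |θ| / lv + 1 + ‖x‖ with hB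
  set D : ℝ := (B + |θ| / β) / α with hD
  set E : ℝ := D + ∑ ℓ : Fin (M + 1), (Nd ℓ.1 : ℝ) * (A * B) with hE
  have hA0 : 0 ≤ A := by positivity
  have hB0 : 0 ≤ B := by positivity
  have hD0 : 0 ≤ D := by positivity
  have hE0 : 0 ≤ E := add_nonneg hD0 (sum_nonneg fun _ _ => by positivity)
  refine (Metric.isBounded_closedBall (x := (0 : Pt M N Nd)) (r := A + B + D + E)).subset ?_
  rintro z ⟨⟨hin, hlin, hcone⟩, hθ⟩
  obtain ⟨h1, h2, h3⟩ := Opp_bounds (y := y) hβ hlw hlv hcone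
  replace hθ := hθ.trans (le_abs_self θ)
  have hW : ∀ ℓ i j, |z.1 ℓ i j| ≤ A := fun ℓ i j => by
    rw [hA, le_div_iff₀' hlw]
    exact (abs_weight_le hlw z.1 ℓ i j).trans (h1.trans hθ)
  have hv : ∀ n ℓ i, |z.2.2.1 n ℓ i| ≤ B := by
    intro n ℓ
    induction ℓ using Fin.cases with
    | zero =>
      intro i
      have e : z.2.2.1 n 0 = x n := hin n
      rw [e]
      have := (norm_le_pi_norm (x n) i).trans (norm_le_pi_norm x n)
      rw [Real.norm_eq_abs] at this
      have : 0 ≤ |θ| / lv := by positivity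
      linarith
    | succ ℓ =>
      intro i
      have hs : (z.2.2.1 n ℓ.succ i) ^ 2 ≤ |θ| / lv := by
        rw [le_div_iff₀' hlv]
        refine le_trans (mul_le_mul_of_nonneg_left ?_ hlv.le) (h2.trans hθ)
        exact le_sum3 (f := fun n ℓ i => (z.2.2.1 n ℓ.succ i) ^ 2) (fun _ _ _ => sq_nonneg _) n ℓ i
      have := norm_nonneg x
      have hq := sq_abs (z.2.2.1 n ℓ.succ i)
      -- `|t| ≤ t ^ 2 + 1`
      nlinarith [sq_nonneg (|z.2.2.1 n ℓ.succ i| - 1), abs_nonneg (z.2.2.1 n ℓ.succ i)]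
  have hu : ∀ n ℓ i, |z.2.2.2 n ℓ i| ≤ D := fun n ℓ i => by
    rw [hD, le_div_iff₀' hα0]
    have hp : z.2.2.1 n ℓ.succ i - lrelu α (z.2.2.2 n ℓ i) ≤ |θ| / β := by
      rw [le_div_iff₀' hβ]
      refine le_trans (mul_le_mul_of_nonneg_left ?_ hβ.le) (h3.trans hθ)
      exact le_sum3 (penalty_nonneg hcone) n ℓ i
    have hp0 := penalty_nonneg hcone n ℓ i
    have hvb := abs_le.1 (hv n ℓ.succ i)
    refine (mul_abs_le_abs_lrelu hα0 hα1 _).trans (abs_le.2 ⟨?_, ?_⟩)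
    · linarith
    · have : 0 ≤ |θ| / β := by positivity
      linarith
  have hb : ∀ ℓ i, |z.2.1 ℓ i| ≤ E := fun ℓ i => by
    let n : Fin N := ⟨0, hN⟩
    have hs : |∑ j : Fin (Nd ℓ.1), z.1 ℓ i j * z.2.2.1 n ℓ.castSucc j| ≤ Nd ℓ.1 * (A * B) := by
      refine (abs_sum_le_sum_abs _ _).trans ?_
      refine (sum_le_card_nsmul _ _ (A * B) fun j _ => ?_).trans (by simp)
      rw [abs_mul]
      exact mul_le_mul (hW ℓ i j) (hv n ℓ.castSucc j) (abs_nonneg _) hA0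
    have hs' : (Nd ℓ.1 : ℝ) * (A * B) ≤ ∑ ℓ : Fin (M + 1), (Nd ℓ.1 : ℝ) * (A * B) :=
      single_le_sum (f := fun ℓ : Fin (M + 1) => (Nd ℓ.1 : ℝ) * (A * B))
        (fun _ _ => by positivity) (mem_univ ℓ)
    have e := hlin n ℓ i
    have hun := abs_le.1 (hu n ℓ i)
    have := abs_le.1 hs
    exact abs_le.2 ⟨by linarith, by linarith⟩
  have hR : 0 ≤ A + B + D + E := by positivity
  rw [mem_closedBall_zero_iff]
  refine max_le ?_ (max_le ?_ (max_le ?_ ?_))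
  · refine (pi_norm_le_iff_of_nonneg hR).2 fun ℓ => (pi_norm_le_iff_of_nonneg hR).2 fun i =>
      (pi_norm_le_iff_of_nonneg hR).2 fun j => ?_
    exact (hW ℓ i j).trans (by linarith)
  · refine (pi_norm_le_iff_of_nonneg hR).2 fun ℓ => (pi_norm_le_iff_of_nonneg hR).2 fun i => ?_
    exact (hb ℓ i).trans (by linarith)
  · refine (pi_norm_le_iff_of_nonneg hR).2 fun n => (pi_norm_le_iff_of_nonneg hR).2 fun ℓ =>
      (pi_norm_le_iff_of_nonneg hR).2 fun i => ?_
    exact (hv n ℓ i).trans (by linarith)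
  · refine (pi_norm_le_iff_of_nonneg hR).2 fun n => (pi_norm_le_iff_of_nonneg hR).2 fun ℓ =>
      (pi_norm_le_iff_of_nonneg hR).2 fun i => ?_
    exact (hu n ℓ i).trans (by linarith)

/-- The point with zero weights, biases and `u`, and with `v` equal to the data on the input layer
and zero on the other layers. -/
def zeroNet (x : Fin N → Fin (Nd 0) → ℝ) : Pt M N Nd :=
  (0, 0, fun n => Fin.cases (motive := fun ℓ : Fin (M + 2) => Fin (Nd ℓ.1) → ℝ) (x n) fun _ => 0, 0)

lemma zeroNet_feas2 (α : ℝ) (x : Fin N → Fin (Nd 0) → ℝ) :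
    feas2 α x (zeroNet x : Pt M N Nd) := by
  refine ⟨fun n => rfl, fun n ℓ i => by simp [zeroNet], fun n ℓ i => ⟨le_rfl, ?_⟩⟩
  exact (mul_zero α).le

/-- the solution set of problem (PP) is nonempty and bounded. -/
theorem solutionSet_nonempty_and_bounded
    (M N : ℕ) (Nd : ℕ → ℕ) (hN : 1 ≤ N) (hNd : ∀ ℓ ≤ M + 1, 1 ≤ Nd ℓ)
    (α β lw lv : ℝ) (hα0 : 0 < α) (hα1 : α < 1) (hβ : 0 < β)
    (hlw : 0 < lw) (hlv : 0 < lv)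
    (x : Fin N → Fin (Nd 0) → ℝ) (y : Fin N → Fin (Nd (M + 1)) → ℝ)
    : (∃ z : Pt M N Nd, feas2 α x z ∧
        ∀ z' : Pt M N Nd, feas2 α x z' → Opp α β lw lv y z ≤ Opp α β lw lv y z') ∧
      Bornology.IsBounded {z : Pt M N Nd | feas2 α x z ∧
        ∀ z' : Pt M N Nd, feas2 α x z' → Opp α β lw lv y z ≤ Opp α β lw lv y z'} := by
  set θ := Opp α β lw lv y (zeroNet x : Pt M N Nd) with hθ
  have hbdd := levelSet_isBounded hN hα0 hα1 hβ hlw hlv θ x y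
  have hcomp : IsCompact (levelSet α β lw lv θ x y) :=
    Metric.isCompact_of_isClosed_isBounded (levelSet_isClosed α β lw lv θ x y) hbdd
  have h0 : feas2 α x (zeroNet x : Pt M N Nd) := zeroNet_feas2 α x
  refine ⟨?_, hbdd.subset fun z hz => ⟨hz.1, hz.2 _ h0⟩⟩
  obtain ⟨z, hz, hmin⟩ := hcomp.exists_isMinOn ⟨zeroNet x, h0, le_rfl⟩
    (Opp_continuous α β lw lv y).continuousOn
  refine ⟨z, hz.1, fun z' hz' => ?_⟩
  rcases le_total (Opp α β lw lv y z') θ with h | h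
  · exact hmin ⟨hz', h⟩
  · exact hz.2.trans h
end
end

section
/- (Exact penalty: local minimizers of (PP).) Suppose β > L·L_Ō·max{θ_w, 1}^L. If (w*,b*,v*,u*) ∈ Ω₂ satisfies O(w*,v*,u*) < θ and is a local minimizer of O over Ω₂, then (w*,b*,v*,u*) ∈ Ω₁ and it is a local minimizer of Ō over Ω₁. -/
/-!
Suppose some slack `d = v_{n₀,ℓ₀} - σ(u_{n₀,ℓ₀}) ≥ 0` of the local minimizer is nonzero. Keep the
weights and biases, and run the forward pass again, with the slacks prescribed to be the old ones
except that the one at `(n₀, ℓ₀)` is multiplied by `1 - t` (`exists_feas2_slack`). With `T = t ‖d‖₁`,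
the penalty term drops by exactly `β T`. On the other hand the layers before `ℓ₀` do not move,
`v_{n₀,ℓ₀}` moves by at most `T`, and since `σ` is `1`-Lipschitz each subsequent layer moves at most
`‖W‖_F ≤ C = max θ_w 1` times as much as the preceding one. As at most `L` blocks `v_{n₀,ℓ}` and
`L - 1` blocks `u_{n₀,ℓ}` move, each by at most `C ^ (L - 1) T`, the Euclidean displacement is at most
`√(2 L - 1) C ^ (L - 1) T ≤ L C ^ (L - 1) T` (`propagation_bound`), so `Ō` grows by less than `β T`.
For small `t` the new point is near the old one and lies in the level set, contradicting local
minimality. Hence every slack vanishes; as `O = Ō` on `Ω₁ ⊆ Ω₂`, the second claim is immediate.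
-/

open Finset Filter Topology

noncomputable section

variable {M N : ℕ} {Nd : ℕ → ℕ}

/-! ### Activation and slacks -/

lemma abs_lrelu_sub_le {α : ℝ} (hα0 : 0 < α) (hα1 : α < 1) (s t : ℝ) :
    |lrelu α s - lrelu α t| ≤ |s - t| := by
  refine (abs_max_sub_max_le_max _ _ _ _).trans (max_le le_rfl ?_)
  rw [← mul_sub, abs_mul, abs_of_pos hα0]
  exact mul_le_of_le_one_left (abs_nonneg _) hα1.le

lemma inCone_iff {α : ℝ} {z : Pt M N Nd} :
    inCone α z ↔ ∀ (n : Fin N) (ℓ : Fin (M + 1)) (i : Fin (Nd (ℓ.1 + 1))),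
      0 ≤ z.2.2.1 n ℓ.succ i - lrelu α (z.2.2.2 n ℓ i) := by
  simp only [inCone, lrelu, sub_nonneg, max_le_iff]

/-- The layers `v_{n,k}` of the forward pass with weights `W`, biases `b` and inputs `x`, in which
the slack `s` is added after each activation. Layers are indexed by `ℕ`, with the value `0` beyond
the last layer. -/
def fwd (α : ℝ) (x : Fin N → Fin (Nd 0) → ℝ) (W : Wt M Nd) (b : Bs M Nd) (s : Us M N Nd)
    (n : Fin N) : (k : ℕ) → Fin (Nd k) → ℝ
  | 0 => x n
  | k + 1 => fun i =>
      if h : k < M + 1 then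
        lrelu α ((∑ j, W ⟨k, h⟩ i j * fwd α x W b s n k j) + b ⟨k, h⟩ i) + s n ⟨k, h⟩ i
      else 0

/-- Weights, biases and nonnegative slacks can be prescribed freely on `Ω₂`. -/
lemma exists_feas2_slack (α : ℝ) (x : Fin N → Fin (Nd 0) → ℝ) (W : Wt M Nd) (b : Bs M Nd)
    (s : Us M N Nd) (hs : ∀ n ℓ i, 0 ≤ s n ℓ i) :
    ∃ z : Pt M N Nd, z.1 = W ∧ z.2.1 = b ∧ feas2 α x z ∧
      ∀ n ℓ i, z.2.2.1 n ℓ.succ i - lrelu α (z.2.2.2 n ℓ i) = s n ℓ i := by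
  let z : Pt M N Nd := (W, b, fun n ℓ => fwd α x W b s n ℓ.1,
    fun n ℓ i => (∑ j, W ℓ i j * fwd α x W b s n ℓ.1 j) + b ℓ i)
  have hz : ∀ n ℓ i, z.2.2.1 n ℓ.succ i - lrelu α (z.2.2.2 n ℓ i) = s n ℓ i := by
    intro n ℓ i
    change fwd α x W b s n (ℓ.1 + 1) i - _ = _
    rw [fwd]
    beta_reduce
    rw [dif_pos ℓ.2]
    exact add_sub_cancel_left _ _
  refine ⟨z, rfl, rfl, ⟨fun n => rfl, fun n ℓ i => rfl, inCone_iff.2 fun n ℓ i => ?_⟩, hz⟩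
  rw [hz]
  exact hs n ℓ i

/-! ### Propagation of a perturbation through the layers -/

/-- Propagation of a perturbation of size `T` created at layer `ℓ₀`: here `E` and `U` stand for the
squared displacements of the `v`- and `u`-layers of one sample, and each layer amplifies by at
most `C`. -/
lemma propagation_bound {E : Fin (M + 2) → ℝ} {U : Fin (M + 1) → ℝ} {C T : ℝ} (hC : 1 ≤ C)
    (ℓ₀ : Fin (M + 1)) (hE0 : E 0 = 0) (hEnn : ∀ ℓ, 0 ≤ E ℓ) (hUnn : ∀ ℓ, 0 ≤ U ℓ)
    (hU : ∀ ℓ, U ℓ ≤ C ^ 2 * E ℓ.castSucc) (hstep : ∀ ℓ, ℓ ≠ ℓ₀ → E ℓ.succ ≤ U ℓ)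
    (hjump : U ℓ₀ = 0 → E ℓ₀.succ ≤ T ^ 2) :
    ∑ ℓ, E ℓ + ∑ ℓ, U ℓ ≤ ((M + 1) * C ^ M * T) ^ 2 := by
  have hC2 : 1 ≤ C ^ 2 := one_le_pow₀ hC
  have hT : 0 ≤ T ^ 2 := sq_nonneg T
  -- The factor `C ^ 2` on the left encodes the exponent `ℓ - 1` without subtraction.
  have key : ∀ ℓ : Fin (M + 2), (ℓ.1 ≤ ℓ₀.1 → E ℓ = 0) ∧ C ^ 2 * E ℓ ≤ (C ^ 2) ^ ℓ.1 * T ^ 2 := by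
    intro ℓ
    induction ℓ using Fin.induction with
    | zero => exact ⟨fun _ => hE0, by rw [hE0]; simpa using hT⟩
    | succ ℓ ih =>
      obtain ⟨ih1, ih2⟩ := ih
      simp only [Fin.val_castSucc] at ih1 ih2
      have hU0 : ℓ.1 ≤ ℓ₀.1 → U ℓ = 0 := fun h => by
        have := hU ℓ
        rw [ih1 h, mul_zero] at this
        exact le_antisymm this (hUnn ℓ)
      have hpow : 1 ≤ (C ^ 2) ^ ℓ.1 := one_le_pow₀ hC2
      constructor
      · intro h
        simp only [Fin.val_succ] at h
        have h1 : ℓ ≠ ℓ₀ := by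
          rintro rfl
          omega
        have h2 := hstep ℓ h1
        rw [hU0 (by omega)] at h2
        exact le_antisymm h2 (hEnn _)
      · have hE : E ℓ.succ ≤ (C ^ 2) ^ ℓ.1 * T ^ 2 := by
          by_cases h : ℓ = ℓ₀
          · subst h
            exact (hjump (hU0 le_rfl)).trans (le_mul_of_one_le_left hT hpow)
          · exact ((hstep ℓ h).trans (hU ℓ)).trans ih2
        simp only [Fin.val_succ]
        rw [pow_succ' (C ^ 2), mul_assoc]
        exact mul_le_mul_of_nonneg_left hE (by positivity)
  have hmono : ∀ k : ℕ, k ≤ M → (C ^ 2) ^ k * T ^ 2 ≤ (C ^ 2) ^ M * T ^ 2 := fun k hk =>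
    mul_le_mul_of_nonneg_right (pow_le_pow_right₀ hC2 hk) hT
  have hEsum : ∑ ℓ, E ℓ ≤ (M + 1) * ((C ^ 2) ^ M * T ^ 2) := by
    rw [Fin.sum_univ_succ, hE0, zero_add]
    refine (Finset.sum_le_card_nsmul _ _ ((C ^ 2) ^ M * T ^ 2) fun ℓ _ => ?_).trans_eq (by simp)
    refine le_trans ?_ (hmono ℓ.1 (by omega))
    have h := (key ℓ.succ).2
    rw [Fin.val_succ, pow_succ' (C ^ 2), mul_assoc] at h
    exact le_of_mul_le_mul_left h (by positivity)
  have hUsum : ∑ ℓ, U ℓ ≤ M * ((C ^ 2) ^ M * T ^ 2) := by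
    have h0 : U 0 ≤ 0 := by simpa [hE0] using hU 0
    rw [Fin.sum_univ_succ, le_antisymm h0 (hUnn 0), zero_add]
    refine (Finset.sum_le_card_nsmul _ _ ((C ^ 2) ^ M * T ^ 2) fun ℓ _ => ?_).trans_eq (by simp)
    exact ((hU _).trans (key ℓ.succ.castSucc).2).trans (hmono _ (by simp))
  have hQ : 0 ≤ (C ^ 2) ^ M * T ^ 2 := by positivity
  have hexp : ((M + 1) * C ^ M * T) ^ 2 = ((M : ℝ) + 1) ^ 2 * ((C ^ 2) ^ M * T ^ 2) := by
    rw [← pow_mul, mul_comm 2 M, pow_mul]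
    ring
  rw [hexp]
  nlinarith [mul_nonneg (sq_nonneg (M : ℝ)) hQ]

/-! ### Consequences of bounded objective value -/

lemma continuous_Opp (α β lw lv : ℝ) (y : Fin N → Fin (Nd (M + 1)) → ℝ) :
    Continuous (fun z : Pt M N Nd => Opp α β lw lv y z) := by
  unfold Opp Obar R1 R2 lrelu
  fun_prop

lemma R1_le_Opp {α β lw lv : ℝ} (hβ : 0 < β) (hlv : 0 < lv)
    (y : Fin N → Fin (Nd (M + 1)) → ℝ) {z : Pt M N Nd} (hz : inCone α z) :
    R1 lw z.1 ≤ Opp α β lw lv y z := by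
  have h1 : 0 ≤ (1 / (N : ℝ)) * ∑ n : Fin N, ∑ i : Fin (Nd (M + 1)),
      (z.2.2.1 n (Fin.last (M + 1)) i - y n i) ^ 2 := by positivity
  have h2 : 0 ≤ R2 lv z.2.2.1 := by unfold R2; positivity
  have h3 : 0 ≤ β * ∑ n : Fin N, ∑ ℓ : Fin (M + 1), ∑ i : Fin (Nd (ℓ.1 + 1)),
        (z.2.2.1 n ℓ.succ i - lrelu α (z.2.2.2 n ℓ i)) :=
    mul_nonneg hβ.le (Finset.sum_nonneg fun n _ => Finset.sum_nonneg fun ℓ _ =>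
      Finset.sum_nonneg fun i _ => inCone_iff.1 hz n ℓ i)
  unfold Opp Obar
  linarith

/-- A bound on the column norm regularizer bounds the squared Frobenius norm of every layer. -/
lemma sum_sq_le_of_R1_le {lw θ : ℝ} (hlw : 0 < lw) {W : Wt M Nd} (h : R1 lw W ≤ θ)
    (ℓ : Fin (M + 1)) : ∑ i, ∑ j, W ℓ i j ^ 2 ≤ (θ / lw) ^ 2 := by
  set c : Fin (Nd ℓ.1) → ℝ := fun j => Real.sqrt (∑ i, W ℓ i j ^ 2) with hc
  have hc0 : ∀ j, 0 ≤ c j := fun j => Real.sqrt_nonneg _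
  have h1 : ∑ i, ∑ j, W ℓ i j ^ 2 = ∑ j, c j ^ 2 := by
    rw [Finset.sum_comm]
    refine Finset.sum_congr rfl fun j _ => ?_
    rw [hc, Real.sq_sqrt (by positivity)]
  have h2 : ∑ j, c j ≤ θ / lw := by
    rw [le_div_iff₀' hlw]
    refine le_trans (mul_le_mul_of_nonneg_left ?_ hlw.le) h
    exact Finset.single_le_sum
      (f := fun ℓ : Fin (M + 1) => ∑ j, Real.sqrt (∑ i, W ℓ i j ^ 2))
      (fun ℓ _ => by positivity) (Finset.mem_univ ℓ)
  rw [h1]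
  exact (Finset.sum_sq_le_sq_sum_of_nonneg fun j _ => hc0 j).trans
    (pow_le_pow_left₀ (Finset.sum_nonneg fun j _ => hc0 j) h2 2)

lemma div_le_thw {θ lw : ℝ} (hθ : 0 ≤ θ) (hlw : 0 < lw) (h0 : 1 ≤ Nd 0) :
    θ / lw ≤ thw M Nd θ lw := by
  refine le_mul_of_one_le_right (by positivity) (Real.one_le_sqrt.2 ?_)
  have h1 : (1 : ℝ) ≤ Nd 0 := by exact_mod_cast h0
  have h2 : (0 : ℝ) ≤ ∑ ℓ : Fin (M + 1), (Nd (ℓ.1 + 1) : ℝ) := by positivity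
  linarith

/-! ### Displacement estimates -/

/-- The `ℓ²` distance, grouped by sample, of two points with the same weights and biases. -/
lemma l2dist_eq {z z' : Pt M N Nd} (h1 : z.1 = z'.1) (h2 : z.2.1 = z'.2.1) :
    l2dist z z' = Real.sqrt (∑ n : Fin N,
      (∑ ℓ : Fin (M + 2), ∑ i, (z.2.2.1 n ℓ i - z'.2.2.1 n ℓ i) ^ 2
        + ∑ ℓ : Fin (M + 1), ∑ i, (z.2.2.2 n ℓ i - z'.2.2.2 n ℓ i) ^ 2)) := by
  unfold l2dist
  rw [Finset.sum_add_distrib]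
  simp [h1, h2]

/-- The sup metric, which defines neighbourhoods in `Pt`, is dominated by the `ℓ²` metric, in which
`Ō` is Lipschitz. -/
lemma dist_le_l2dist {z z' : Pt M N Nd} (h1 : z.1 = z'.1) (h2 : z.2.1 = z'.2.1) :
    dist z z' ≤ l2dist z z' := by
  have h0 : 0 ≤ l2dist z z' := Real.sqrt_nonneg _
  have hv : ∀ n ℓ i, |z.2.2.1 n ℓ i - z'.2.2.1 n ℓ i| ≤ l2dist z z' := by
    intro n ℓ i
    rw [l2dist_eq h1 h2]
    refine Real.abs_le_sqrt ?_
    refine le_trans ?_ (Finset.single_le_sum (fun n _ => by positivity) (Finset.mem_univ n))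
    refine le_trans ?_ (le_add_of_nonneg_right (by positivity))
    refine le_trans ?_ (Finset.single_le_sum (fun ℓ _ => by positivity) (Finset.mem_univ ℓ))
    exact Finset.single_le_sum (f := fun i => (z.2.2.1 n ℓ i - z'.2.2.1 n ℓ i) ^ 2)
      (fun i _ => by positivity) (Finset.mem_univ i)
  have hu : ∀ n ℓ i, |z.2.2.2 n ℓ i - z'.2.2.2 n ℓ i| ≤ l2dist z z' := by
    intro n ℓ i
    rw [l2dist_eq h1 h2]
    refine Real.abs_le_sqrt ?_
    refine le_trans ?_ (Finset.single_le_sum (fun n _ => by positivity) (Finset.mem_univ n))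
    refine le_trans ?_ (le_add_of_nonneg_left (by positivity))
    refine le_trans ?_ (Finset.single_le_sum (fun ℓ _ => by positivity) (Finset.mem_univ ℓ))
    exact Finset.single_le_sum (f := fun i => (z.2.2.2 n ℓ i - z'.2.2.2 n ℓ i) ^ 2)
      (fun i _ => by positivity) (Finset.mem_univ i)
  rw [Prod.dist_eq, Prod.dist_eq, Prod.dist_eq, h1, h2, dist_self, dist_self]
  refine max_le h0 (max_le h0 (max_le ?_ ?_))
  · exact (dist_pi_le_iff h0).2 fun n => (dist_pi_le_iff h0).2 fun ℓ => (dist_pi_le_iff h0).2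
      fun i => hv n ℓ i
  · exact (dist_pi_le_iff h0).2 fun n => (dist_pi_le_iff h0).2 fun ℓ => (dist_pi_le_iff h0).2
      fun i => hu n ℓ i

/-- Multiplying the slack of one layer `ℓ₀` of one sample `n₀` by `1 - t`, with weights, biases and
the other slacks kept, displaces the point by at most `L C ^ (L - 1)` times the removed slack. -/
lemma l2dist_le_of_shrink {α C t : ℝ} (hα0 : 0 < α) (hα1 : α < 1) (hC : 1 ≤ C)
    (ht : 0 ≤ t)
    {x : Fin N → Fin (Nd 0) → ℝ} {z zs : Pt M N Nd} (hz : feas2 α x z) (hzs : feas2 α x zs)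
    (h1 : z.1 = zs.1) (h2 : z.2.1 = zs.2.1)
    (hW : ∀ ℓ, ∑ i, ∑ j, zs.1 ℓ i j ^ 2 ≤ C ^ 2) (n₀ : Fin N) (ℓ₀ : Fin (M + 1))
    (hsl : ∀ n ℓ i, z.2.2.1 n ℓ.succ i - lrelu α (z.2.2.2 n ℓ i)
      = (zs.2.2.1 n ℓ.succ i - lrelu α (zs.2.2.2 n ℓ i))
        * (1 - if n = n₀ ∧ ℓ = ℓ₀ then t else 0)) :
    l2dist z zs ≤ (M + 1) * C ^ M *
      (t * ∑ i, (zs.2.2.1 n₀ ℓ₀.succ i - lrelu α (zs.2.2.2 n₀ ℓ₀ i))) := by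
  have hd := inCone_iff.1 hzs.2.2
  set D := ∑ i, (zs.2.2.1 n₀ ℓ₀.succ i - lrelu α (zs.2.2.2 n₀ ℓ₀ i)) with hD
  have hD0 : 0 ≤ D := Finset.sum_nonneg fun i _ => hd n₀ ℓ₀ i
  set E : Fin N → Fin (M + 2) → ℝ := fun n ℓ => ∑ i, (z.2.2.1 n ℓ i - zs.2.2.1 n ℓ i) ^ 2 with hE
  set U : Fin N → Fin (M + 1) → ℝ := fun n ℓ => ∑ i, (z.2.2.2 n ℓ i - zs.2.2.2 n ℓ i) ^ 2 with hU
  have hE0 : ∀ n, E n 0 = 0 := fun n => by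
    have e : z.2.2.1 n 0 = zs.2.2.1 n 0 := (hz.1 n).trans (hzs.1 n).symm
    simp [hE, e]
  have hEnn : ∀ n ℓ, 0 ≤ E n ℓ := fun n ℓ => by simp only [hE]; positivity
  have hUnn : ∀ n ℓ, 0 ≤ U n ℓ := fun n ℓ => by simp only [hU]; positivity
  have hUE : ∀ n ℓ, U n ℓ ≤ C ^ 2 * E n ℓ.castSucc := by
    intro n ℓ
    have hdu : ∀ i, (z.2.2.2 n ℓ i - zs.2.2.2 n ℓ i) ^ 2
        ≤ (∑ j, zs.1 ℓ i j ^ 2) * E n ℓ.castSucc := by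
      intro i
      rw [hz.2.1 n ℓ i, hzs.2.1 n ℓ i, h1, h2, add_sub_add_right_eq_sub,
        ← Finset.sum_sub_distrib]
      simp only [← mul_sub]
      exact Finset.sum_mul_sq_le_sq_mul_sq _ _ _
    calc U n ℓ ≤ ∑ i, (∑ j, zs.1 ℓ i j ^ 2) * E n ℓ.castSucc :=
          Finset.sum_le_sum fun i _ => hdu i
      _ = (∑ i, ∑ j, zs.1 ℓ i j ^ 2) * E n ℓ.castSucc := (Finset.sum_mul _ _ _).symm
      _ ≤ C ^ 2 * E n ℓ.castSucc := mul_le_mul_of_nonneg_right (hW ℓ) (hEnn _ _)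
  have hstep : ∀ n ℓ, ¬ (n = n₀ ∧ ℓ = ℓ₀) → E n ℓ.succ ≤ U n ℓ := by
    intro n ℓ h
    refine Finset.sum_le_sum fun i _ => sq_le_sq.2 ?_
    have e := hsl n ℓ i
    rw [if_neg h] at e
    have e' : z.2.2.1 n ℓ.succ i - zs.2.2.1 n ℓ.succ i
        = lrelu α (z.2.2.2 n ℓ i) - lrelu α (zs.2.2.2 n ℓ i) := by linarith
    rw [e']
    exact abs_lrelu_sub_le hα0 hα1 _ _
  have hjump : U n₀ ℓ₀ = 0 → E n₀ ℓ₀.succ ≤ (t * D) ^ 2 := by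
    intro h
    have hu : ∀ i, z.2.2.2 n₀ ℓ₀ i = zs.2.2.2 n₀ ℓ₀ i := fun i => by
      have := (Finset.sum_eq_zero_iff_of_nonneg (fun i _ => sq_nonneg _)).1 h i (Finset.mem_univ i)
      exact sub_eq_zero.1 (pow_eq_zero_iff two_ne_zero |>.1 this)
    have e : ∀ i, (z.2.2.1 n₀ ℓ₀.succ i - zs.2.2.1 n₀ ℓ₀.succ i) ^ 2
        = t ^ 2 * (zs.2.2.1 n₀ ℓ₀.succ i - lrelu α (zs.2.2.2 n₀ ℓ₀ i)) ^ 2 := fun i => by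
      have e := hsl n₀ ℓ₀ i
      rw [if_pos ⟨rfl, rfl⟩, hu i] at e
      rw [← mul_pow, ← neg_sq (t * _)]
      congr 1
      linarith
    calc E n₀ ℓ₀.succ
        = t ^ 2 * ∑ i, (zs.2.2.1 n₀ ℓ₀.succ i - lrelu α (zs.2.2.2 n₀ ℓ₀ i)) ^ 2 := by
          rw [Finset.mul_sum]
          exact Finset.sum_congr rfl fun i _ => e i
      _ ≤ t ^ 2 * D ^ 2 := mul_le_mul_of_nonneg_left
          (Finset.sum_sq_le_sq_sum_of_nonneg fun i _ => hd n₀ ℓ₀ i) (sq_nonneg t)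
      _ = (t * D) ^ 2 := (mul_pow _ _ _).symm
  rw [l2dist_eq h1 h2]
  refine Real.sqrt_le_iff.2 ⟨by positivity, ?_⟩
  rw [Finset.sum_eq_single_of_mem n₀ (Finset.mem_univ _)]
  · exact propagation_bound hC ℓ₀ (hE0 n₀) (hEnn n₀) (hUnn n₀) (hUE n₀)
      (fun ℓ h => hstep n₀ ℓ fun h' => h h'.2) hjump
  · intro n _ hn
    -- The other samples carry a perturbation of size `T = 0`.
    have := propagation_bound (T := 0) hC ℓ₀ (hE0 n) (hEnn n) (hUnn n) (hUE n)
      (fun ℓ _ => hstep n ℓ fun h' => hn h'.1)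
      (fun h => by
        have := hstep n ℓ₀ fun h' => hn h'.1
        rw [h] at this
        simpa using this)
    rw [mul_zero, zero_pow two_ne_zero] at this
    exact le_antisymm this (add_nonneg (Finset.sum_nonneg fun ℓ _ => hEnn n ℓ)
      (Finset.sum_nonneg fun ℓ _ => hUnn n ℓ))

/-! ### Exact penalty -/

/-- exact penalty, local minimizers of (PP): a local minimizer of
`O` over `Ω₂` with objective value `< θ` lies in `Ω₁` and is a local minimizer
of `Ō` over `Ω₁`. -/
theorem exact_penalty_local_PP
    (M N : ℕ) (Nd : ℕ → ℕ) (hN : 1 ≤ N) (hNd : ∀ ℓ ≤ M + 1, 1 ≤ Nd ℓ)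
    (α β lw lv θ LO : ℝ) (hα0 : 0 < α) (hα1 : α < 1) (hβ : 0 < β)
    (hlw : 0 < lw) (hlv : 0 < lv)
    (x : Fin N → Fin (Nd 0) → ℝ) (y : Fin N → Fin (Nd (M + 1)) → ℝ)
    (hθ : (1 / (N : ℝ)) * ∑ n : Fin N, ∑ i : Fin (Nd (M + 1)), (y n i) ^ 2 < θ)
    (hLip : ∀ z z' : Pt M N Nd, z ∈ levelSet α β lw lv θ x y →
      z' ∈ levelSet α β lw lv θ x y →
      |Obar lw lv y z - Obar lw lv y z'| ≤ LO * l2dist z z')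
    (hbig : (M + 1 : ℝ) * LO * max (thw M Nd θ lw) 1 ^ (M + 1) < β)
    (zs : Pt M N Nd) (hfeas : feas2 α x zs) (hlt : Opp α β lw lv y zs < θ)
    (hloc : ∃ ε > (0 : ℝ), ∀ z : Pt M N Nd, feas2 α x z → dist z zs < ε →
      Opp α β lw lv y zs ≤ Opp α β lw lv y z) :
    feas1 α x zs ∧
      ∃ ε > (0 : ℝ), ∀ z : Pt M N Nd, feas1 α x z → dist z zs < ε →
        Obar lw lv y zs ≤ Obar lw lv y z := by
  have hd := inCone_iff.1 hfeas.2.2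
  have hzero : ∀ (n : Fin N) (ℓ : Fin (M + 1)) (i : Fin (Nd (ℓ.1 + 1))),
      zs.2.2.1 n ℓ.succ i = lrelu α (zs.2.2.2 n ℓ i) := by
    by_contra hne
    push Not at hne
    obtain ⟨n₀, ℓ₀, i₀, hi₀⟩ := hne
    set D := ∑ i, (zs.2.2.1 n₀ ℓ₀.succ i - lrelu α (zs.2.2.2 n₀ ℓ₀ i)) with hD
    have hDpos : 0 < D := Finset.sum_pos' (fun i _ => hd n₀ ℓ₀ i)
      ⟨i₀, Finset.mem_univ _, (hd n₀ ℓ₀ i₀).lt_of_ne (sub_ne_zero.2 hi₀).symm⟩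
    set C := max (thw M Nd θ lw) 1 with hC
    have hC1 : 1 ≤ C := le_max_right _ _
    have hR1 : R1 lw zs.1 ≤ θ := (R1_le_Opp hβ hlv y hfeas.2.2).trans hlt.le
    have hθ0 : 0 ≤ θ := le_trans (by unfold R1; positivity) hR1
    have hW : ∀ ℓ, ∑ i, ∑ j, zs.1 ℓ i j ^ 2 ≤ C ^ 2 := fun ℓ =>
      (sum_sq_le_of_R1_le hlw hR1 ℓ).trans (pow_le_pow_left₀ (by positivity)
        ((div_le_thw hθ0 hlw (hNd 0 (Nat.zero_le _))).trans (le_max_left _ _)) 2)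
    obtain ⟨ε, hε, hmin⟩ := hloc
    obtain ⟨δ, hδ, hlevel⟩ := Metric.eventually_nhds_iff.1
      ((continuous_Opp α β lw lv y).continuousAt.eventually_lt (continuousAt_const (y := θ)) hlt)
    set K := (M + 1 : ℝ) * C ^ M * D with hK
    have hKpos : 0 < K := by positivity
    -- The displacement is at most `t K`, so this `t` keeps it below both `ε` and `δ`.
    obtain ⟨t, ht0, ht1, htK⟩ : ∃ t : ℝ, 0 < t ∧ t ≤ 1 ∧ t * K < min ε δ := by
      have hm : 0 < min ε δ := lt_min hε hδ
      refine ⟨min 1 (min ε δ / (2 * K)), by positivity, min_le_left _ _, ?_⟩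
      calc min 1 (min ε δ / (2 * K)) * K ≤ min ε δ / (2 * K) * K :=
            mul_le_mul_of_nonneg_right (min_le_right _ _) hKpos.le
        _ = min ε δ / 2 := by field_simp
        _ < min ε δ := half_lt_self hm
    obtain ⟨z, hz1, hz2, hz, hsl⟩ := exists_feas2_slack α x zs.1 zs.2.1
      (fun n ℓ i => (zs.2.2.1 n ℓ.succ i - lrelu α (zs.2.2.2 n ℓ i))
        * (1 - if n = n₀ ∧ ℓ = ℓ₀ then t else 0))
      (fun n ℓ i => mul_nonneg (hd n ℓ i) (by split_ifs <;> linarith))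
    have hdist : l2dist z zs ≤ (M + 1) * C ^ M * (t * D) :=
      l2dist_le_of_shrink hα0 hα1 hC1 ht0.le hz hfeas hz1 hz2 hW n₀ ℓ₀ hsl
    have hnear : dist z zs < min ε δ := by
      refine ((dist_le_l2dist hz1 hz2).trans hdist).trans_lt (lt_of_eq_of_lt ?_ htK)
      rw [hK]
      ring
    have hle := hmin z hz (hnear.trans_le (min_le_left _ _))
    have hzθ := hlevel (hnear.trans_le (min_le_right _ _))
    have hgrow := (le_abs_self _).trans (hLip z zs ⟨hz, hzθ.le⟩ ⟨hfeas, hlt.le⟩)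
    have hpen : ∑ n : Fin N, ∑ ℓ : Fin (M + 1), ∑ i : Fin (Nd (ℓ.1 + 1)),
          (z.2.2.1 n ℓ.succ i - lrelu α (z.2.2.2 n ℓ i))
        = ∑ n : Fin N, ∑ ℓ : Fin (M + 1), ∑ i : Fin (Nd (ℓ.1 + 1)),
          (zs.2.2.1 n ℓ.succ i - lrelu α (zs.2.2.2 n ℓ i)) - t * D := by
      simp only [hsl, mul_sub, mul_one, Finset.sum_sub_distrib, ← Finset.sum_mul]
      congr 1
      rw [Finset.sum_eq_single_of_mem n₀ (Finset.mem_univ _),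
        Finset.sum_eq_single_of_mem ℓ₀ (Finset.mem_univ _)]
      · rw [if_pos ⟨rfl, rfl⟩, hD, Finset.sum_sub_distrib]
        exact mul_comm _ _
      · intro ℓ _ h
        simp [h]
      · intro n _ h
        simp [h]
    have hsmall : LO * l2dist z zs < β * (t * D) := by
      have htD : 0 < t * D := by positivity
      have hl0 : 0 ≤ l2dist z zs := Real.sqrt_nonneg _
      rcases le_total LO 0 with hLO | hLO
      · exact (mul_nonpos_of_nonpos_of_nonneg hLO hl0).trans_lt (by positivity)
      · calc LO * l2dist z zs ≤ LO * ((M + 1) * C ^ M * (t * D)) :=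
              mul_le_mul_of_nonneg_left hdist hLO
          _ = (M + 1) * LO * C ^ M * (t * D) := by ring
          _ ≤ (M + 1) * LO * C ^ (M + 1) * (t * D) := by
              gcongr
              omega
          _ < β * (t * D) := mul_lt_mul_of_pos_right hbig htD
    unfold Opp at hle
    rw [hpen, mul_sub] at hle
    linarith
  have hOpp : ∀ z : Pt M N Nd, feas1 α x z → Opp α β lw lv y z = Obar lw lv y z := by
    intro z hz
    simp [Opp, hz.2.2]
  have hfeas1 : feas1 α x zs := ⟨hfeas.1, hfeas.2.1, hzero⟩
  refine ⟨hfeas1, ?_⟩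
  obtain ⟨ε, hε, hmin⟩ := hloc
  refine ⟨ε, hε, fun z hz hdz => ?_⟩
  rw [← hOpp z hz, ← hOpp zs hfeas1]
  exact hmin z ⟨hz.1, hz.2.1, inCone_iff.2 fun n ℓ i => (sub_eq_zero.2 (hz.2.2 n ℓ i)).ge⟩ hdz
end
end
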